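/- Let w ∈ ℝ^d, x ∈ ℝ^d, and c > 0. For each coordinate j ∈ {1, …, d} let S_j ⊆ ℝ be a nonempty finite set, let l_j = min S_j and u_j = max S_j, and let δ_j ≥ 0 bound the maximum gap between consecutive points of S_j (for every t ∈ [l_j, u_j] there exist s, s' ∈ S_j with s' ≤ t ≤ s, s − t ≤ δ_j, and t − s' ≤ δ_j). Suppose the continuous recourse problem is feasible, i.e., the set B = {b ∈ ∏_j [l_j, u_j] : ⟨w, x + b⟩ ≥ 0} is nonempty, and let b* be a point of B of minimum ℓ₂-norm (which exists since B is compact). Then the discretized feasible set G = {a ∈ ∏_j S_j : ⟨w, x + a⟩ ≥ 0} is nonempty, and any minimum-ℓ₂-norm element a* of G satisfies c·‖a*‖₂ − c·‖b*‖₂ ≤ c·√(∑_{j=1}^d δ_j²). That is, the discretization error in the cost of recourse is bounded by the maximum discretization gap and can be controlled by refining the grid. -/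

import Mathlib

/-- **discretization error in the cost of recourse.** Let `w, x ∈ ℝ^d`
and `c > 0`. For each coordinate `j` let `S j` be a nonempty finite grid with
endpoints `l j = min S j`, `u j = max S j`, and let `δ j ≥ 0` bound the maximum gap
between consecutive grid points. Suppose the continuous recourse problem over the
box `∏ⱼ [l j, u j]` is feasible and `b*` is a minimum-ℓ₂-norm feasible continuous
action. Then the discretized feasible set over the grid `∏ⱼ S j` is nonempty, and
any minimum-ℓ₂-norm grid action `a*` satisfies
`c·‖a*‖₂ - c·‖b*‖₂ ≤ c·√(∑ⱼ δ j²)`: the discretization error in the cost of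
recourse is bounded by the maximum discretization gap. -/
theorem discretization_cost_error_bound {d : ℕ} (w x : Fin d → ℝ) (c : ℝ) (hc : 0 < c)
    (S : Fin d → Finset ℝ) (hS : ∀ j, (S j).Nonempty)
    (δ : Fin d → ℝ) (hδ : ∀ j, 0 ≤ δ j)
    (hgap : ∀ j, ∀ t ∈ Set.Icc ((S j).min' (hS j)) ((S j).max' (hS j)),
      ∃ s ∈ S j, ∃ s' ∈ S j, s' ≤ t ∧ t ≤ s ∧ s - t ≤ δ j ∧ t - s' ≤ δ j)
    (bstar : Fin d → ℝ)
    (hbfeas : (∀ j, bstar j ∈ Set.Icc ((S j).min' (hS j)) ((S j).max' (hS j))) ∧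
      0 ≤ ∑ j, w j * (x j + bstar j))
    (hbmin : ∀ b : Fin d → ℝ,
      (∀ j, b j ∈ Set.Icc ((S j).min' (hS j)) ((S j).max' (hS j))) →
      0 ≤ (∑ j, w j * (x j + b j)) →
      Real.sqrt (∑ j, bstar j ^ 2) ≤ Real.sqrt (∑ j, b j ^ 2)) :
    (∃ a : Fin d → ℝ, (∀ j, a j ∈ S j) ∧ 0 ≤ ∑ j, w j * (x j + a j)) ∧
    (∀ astar : Fin d → ℝ,
      (∀ j, astar j ∈ S j) → 0 ≤ (∑ j, w j * (x j + astar j)) →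
      (∀ a : Fin d → ℝ, (∀ j, a j ∈ S j) → 0 ≤ (∑ j, w j * (x j + a j)) →
        Real.sqrt (∑ j, astar j ^ 2) ≤ Real.sqrt (∑ j, a j ^ 2)) →
      c * Real.sqrt (∑ j, astar j ^ 2) - c * Real.sqrt (∑ j, bstar j ^ 2) ≤
        c * Real.sqrt (∑ j, δ j ^ 2)) := by
  have key : ∀ j, ∃ a ∈ S j, w j * bstar j ≤ w j * a ∧ |a - bstar j| ≤ δ j := by
    intro j
    obtain ⟨s, hs, s', hs', h1, h2, h3, h4⟩ := hgap j (bstar j) (hbfeas.1 j)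
    rcases le_total 0 (w j) with hw | hw
    · exact ⟨s, hs, mul_le_mul_of_nonneg_left h2 hw,
        abs_le.2 ⟨by linarith [hδ j], h3⟩⟩
    · exact ⟨s', hs', mul_le_mul_of_nonpos_left h1 hw,
        abs_le.2 ⟨by linarith, by linarith [hδ j]⟩⟩
  choose a haS haw had using key
  have hfeas : 0 ≤ ∑ j, w j * (x j + a j) := by
    refine hbfeas.2.trans (Finset.sum_le_sum fun j _ => ?_)
    have := haw j
    linarith [mul_add (w j) (x j) (bstar j), mul_add (w j) (x j) (a j)]
  refine ⟨⟨a, haS, hfeas⟩, fun astar _ _ hmin => ?_⟩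
  have h1 := hmin a haS hfeas
  have h2 : Real.sqrt (∑ j, a j ^ 2) ≤
      Real.sqrt (∑ j, bstar j ^ 2) + Real.sqrt (∑ j, (a j - bstar j) ^ 2) := by
    have h := norm_add_le (WithLp.toLp 2 bstar : EuclideanSpace ℝ (Fin d))
      (WithLp.toLp 2 (fun j => a j - bstar j))
    simpa [EuclideanSpace.norm_eq] using h
  have h3 : Real.sqrt (∑ j, (a j - bstar j) ^ 2) ≤ Real.sqrt (∑ j, δ j ^ 2) := by
    refine Real.sqrt_le_sqrt (Finset.sum_le_sum fun j _ => ?_)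
    exact sq_le_sq.2 ((had j).trans (le_abs_self _))
  rw [← mul_sub]
  exact mul_le_mul_of_nonneg_left (by linarith) hc.le
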